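/- Let (b_1, …, b_K) be the canonical basis of ℝ^K with the ℓ_2 norm, let ε > 0, and let S ⊆ [K] with |S| = m ≥ 1. Write b_S = (1/m)·Σ_{i∈S} b_i for the barycenter. Then the following are equivalent: (i) ⋂_{i∈S} B_2(b_i, ε) ≠ ∅; (ii) b_S ∈ ⋂_{i∈S} B_2(b_i, ε); (iii) ε ≥ √((m−1)/m). In particular, for every i ∈ S, ‖b_S − b_i‖_2 = √((m−1)/m). -/

import Mathlib

/-!
The idea is Huygens' identity: among all points `x`, the barycenter minimizes the mean of
the squared distances to the points `b_i`, `i ∈ S`, because that mean equals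
`‖x - b_S‖² + (1 - 1/m)`; the lower bound is `sum_norm_sub_single_sq_ge`. At `x = b_S` all
these distances are equal, to `√((m-1)/m)` (`norm_baryc_sub_single`). So a common point of the
balls forces `ε² ≥ (m-1)/m`, and then the barycenter itself is a common point.
-/

open Metric Finset

/-- The barycenter `(1/|S|) Σ_{i∈S} b_i` of the canonical basis vectors indexed by `S`. -/
noncomputable def baryc (K : ℕ) (S : Finset (Fin K)) : EuclideanSpace ℝ (Fin K) :=
  (S.card : ℝ)⁻¹ • ∑ j ∈ S, EuclideanSpace.single j (1 : ℝ)

theorem inner_baryc_right (K : ℕ) (S : Finset (Fin K)) (x : EuclideanSpace ℝ (Fin K)) :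
    inner ℝ x (baryc K S) = (S.card : ℝ)⁻¹ * ∑ j ∈ S, x j := by
  simp [baryc, inner_smul_right, inner_sum, EuclideanSpace.inner_single_right]

theorem baryc_apply_mem (K : ℕ) (S : Finset (Fin K)) {i : Fin K} (hi : i ∈ S) :
    baryc K S i = (S.card : ℝ)⁻¹ := by
  simp [baryc, Pi.single_apply, hi]

theorem norm_baryc_sq (K : ℕ) (S : Finset (Fin K)) (hS : 1 ≤ S.card) :
    ‖baryc K S‖ ^ 2 = (S.card : ℝ)⁻¹ := by
  have h0 : (S.card : ℝ) ≠ 0 := by positivity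
  have hsum : ∑ j ∈ S, baryc K S j = ∑ _j ∈ S, (S.card : ℝ)⁻¹ :=
    Finset.sum_congr rfl fun j hj => baryc_apply_mem K S hj
  rw [← real_inner_self_eq_norm_sq, inner_baryc_right, hsum, Finset.sum_const, nsmul_eq_mul]
  field_simp

theorem norm_sub_single_sq (K : ℕ) (x : EuclideanSpace ℝ (Fin K)) (i : Fin K) :
    ‖x - EuclideanSpace.single i (1 : ℝ)‖ ^ 2 = ‖x‖ ^ 2 - 2 * x i + 1 := by
  rw [norm_sub_sq_real]
  simp [EuclideanSpace.inner_single_right]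

theorem norm_baryc_sub_single (K : ℕ) (S : Finset (Fin K)) {i : Fin K} (hi : i ∈ S) :
    ‖baryc K S - EuclideanSpace.single i (1 : ℝ)‖
      = Real.sqrt (((S.card : ℝ) - 1) / S.card) := by
  have hS : 1 ≤ S.card := Finset.card_pos.mpr ⟨i, hi⟩
  have h0 : (S.card : ℝ) ≠ 0 := by positivity
  rw [← Real.sqrt_sq (norm_nonneg (baryc K S - _)), norm_sub_single_sq,
    norm_baryc_sq K S hS, baryc_apply_mem K S hi]
  congr 1
  field_simp
  ring

/-- Huygens' identity, with the nonnegative term `m * ‖x - b_S‖ ^ 2` dropped. -/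
theorem sum_norm_sub_single_sq_ge (K : ℕ) (S : Finset (Fin K)) (hS : 1 ≤ S.card)
    (x : EuclideanSpace ℝ (Fin K)) :
    (S.card : ℝ) * (((S.card : ℝ) - 1) / S.card)
      ≤ ∑ i ∈ S, ‖x - EuclideanSpace.single i (1 : ℝ)‖ ^ 2 := by
  have h0 : (S.card : ℝ) ≠ 0 := by positivity
  have key : ∑ i ∈ S, ‖x - EuclideanSpace.single i (1 : ℝ)‖ ^ 2
      = S.card * ‖x - baryc K S‖ ^ 2 + S.card * (((S.card : ℝ) - 1) / S.card) := by
    simp only [norm_sub_single_sq, Finset.sum_add_distrib, Finset.sum_sub_distrib,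
      ← Finset.mul_sum, Finset.sum_const, nsmul_eq_mul]
    rw [norm_sub_sq_real, norm_baryc_sq K S hS, inner_baryc_right]
    field_simp
    ring
  rw [key]
  exact le_add_of_nonneg_left (by positivity)

/-- For canonical basis vectors `b_i` of `ℝ^K` (Euclidean norm), `S ⊆ [K]` with
`|S| = m ≥ 1` and barycenter `b_S`: `‖b_S - b_i‖ = √((m-1)/m)` for all `i ∈ S`, and the
`ε`-balls around the `b_i`, `i ∈ S`, have a common point iff `b_S` is such a common point iff
`ε ≥ √((m-1)/m)`. -/
theorem stmt19 (K : ℕ) (ε : ℝ) (hε : 0 < ε) (S : Finset (Fin K)) (m : ℕ)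
    (hm : S.card = m) (hm1 : 1 ≤ m) :
    (∀ i ∈ S, ‖baryc K S - EuclideanSpace.single i (1 : ℝ)‖
        = Real.sqrt (((m : ℝ) - 1) / m)) ∧
    ((⋂ i ∈ S, closedBall (EuclideanSpace.single i (1 : ℝ)) ε).Nonempty ↔
      baryc K S ∈ ⋂ i ∈ S, closedBall (EuclideanSpace.single i (1 : ℝ)) ε) ∧
    ((baryc K S ∈ ⋂ i ∈ S, closedBall (EuclideanSpace.single i (1 : ℝ)) ε) ↔
      Real.sqrt (((m : ℝ) - 1) / m) ≤ ε) := by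
  subst hm
  have hmem : (baryc K S ∈ ⋂ i ∈ S, closedBall (EuclideanSpace.single i (1 : ℝ)) ε) ↔
      Real.sqrt (((S.card : ℝ) - 1) / S.card) ≤ ε := by
    simp only [Set.mem_iInter, mem_closedBall, dist_eq_norm]
    constructor
    · intro h
      obtain ⟨i, hi⟩ := Finset.card_pos.mp hm1
      exact norm_baryc_sub_single K S hi ▸ h i hi
    · intro h i hi
      rwa [norm_baryc_sub_single K S hi]
  refine ⟨fun i hi => norm_baryc_sub_single K S hi, ⟨?_, fun h => ⟨_, h⟩⟩, hmem⟩
  rintro ⟨x, hx⟩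
  simp only [Set.mem_iInter, mem_closedBall, dist_eq_norm] at hx
  rw [hmem, Real.sqrt_le_left hε.le]
  have hle : ∑ i ∈ S, ‖x - EuclideanSpace.single i (1 : ℝ)‖ ^ 2 ≤ S.card * ε ^ 2 := by
    rw [← nsmul_eq_mul]
    exact Finset.sum_le_card_nsmul _ _ _ fun i hi =>
      pow_le_pow_left₀ (norm_nonneg _) (hx i hi) 2
  exact le_of_mul_le_mul_left ((sum_norm_sub_single_sq_ge K S hm1 x).trans hle)
    (by exact_mod_cast hm1)
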